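/- Let V be an irreducible integrable 𝔏(A)-module with finite-dimensional weight spaces on which the affine center K⊗1 acts trivially. Then there exists a cofinite ideal I of A such that (g'⊗I)·V = 0, where g' = g̊⊗ℂ[t,t⁻¹] ⊕ ℂK. -/

import Mathlib

noncomputable section

/-!
Common setup: a realization of the loop affine-Virasoro algebra
`𝔏(A) = ((g̊ ⊗ ℂ[t,t⁻¹] ⊕ ℂK) ⋊ Vir) ⊗ A`.

* `g` plays the role of the finite dimensional simple Lie algebra `g̊`.
* `A` is a commutative associative unital `ℂ`-algebra.
* `L` plays the role of `𝔏(A)`; the structure fields record the generators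
  `E n x a = (x ⊗ tⁿ) ⊗ a`, `D n a = dₙ ⊗ a`, `K a = K ⊗ a`, `C a = C ⊗ a`
  together with the defining bracket relations, and the fact that the
  generators span `L`.
-/

/-- An ideal of a `ℂ`-algebra is cofinite if the quotient is finite dimensional. -/
def IsCofiniteIdeal {A : Type*} [CommRing A] [Algebra ℂ A] (I : Ideal A) : Prop :=
  FiniteDimensional ℂ (A ⧸ I)

/-- A realization of the loop affine-Virasoro algebra `𝔏(A)`. -/
structure LoopAffVir (g : Type*) [LieRing g] [LieAlgebra ℂ g]
    (A : Type*) [CommRing A] [Algebra ℂ A]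
    (L : Type*) [LieRing L] [LieAlgebra ℂ L] : Type _ where
  /-- the Cartan subalgebra `h̊` of `g̊` -/
  H : LieSubalgebra ℂ g
  isCartan : H.IsCartanSubalgebra
  /-- the invariant nondegenerate symmetric bilinear form on `g̊` -/
  form : g →ₗ[ℂ] g →ₗ[ℂ] ℂ
  form_symm : ∀ x y : g, form x y = form y x
  form_nondeg : ∀ x : g, (∀ y : g, form x y = 0) → x = 0
  form_invariant : ∀ x y z : g, form ⁅x, y⁆ z = form x ⁅y, z⁆
  /-- the root space `g̊_α` -/
  rootSp : Module.Dual ℂ H → Submodule ℂ g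
  rootSp_def : ∀ (α : Module.Dual ℂ H) (x : g),
      x ∈ rootSp α ↔ ∀ h : H, ⁅(h : g), x⁆ = α h • x
  /-- a choice of positive roots `Δ̊₊` -/
  Δplus : Set (Module.Dual ℂ H)
  Δplus_root : ∀ α ∈ Δplus, α ≠ 0 ∧ rootSp α ≠ ⊥
  Δplus_cover : ∀ α : Module.Dual ℂ H, α ≠ 0 → rootSp α ≠ ⊥ → α ∈ Δplus ∨ -α ∈ Δplus
  Δplus_disj : ∀ α ∈ Δplus, -α ∉ Δplus
  /-- `E n x a = (x ⊗ tⁿ) ⊗ a` -/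
  E : ℤ → g →ₗ[ℂ] A →ₗ[ℂ] L
  /-- `D n a = dₙ ⊗ a` -/
  D : ℤ → A →ₗ[ℂ] L
  /-- `K a = K ⊗ a` (affine center) -/
  K : A →ₗ[ℂ] L
  /-- `C a = C ⊗ a` (Virasoro center) -/
  C : A →ₗ[ℂ] L
  lie_EE : ∀ (n m : ℤ) (x y : g) (a b : A),
      ⁅E n x a, E m y b⁆ = E (n + m) ⁅x, y⁆ (a * b)
        + (if m = -n then (n : ℂ) * form x y else 0) • K (a * b)
  lie_DE : ∀ (n m : ℤ) (x : g) (a b : A),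
      ⁅D n a, E m x b⁆ = (m : ℂ) • E (m + n) x (a * b)
  lie_DD : ∀ (n m : ℤ) (a b : A),
      ⁅D n a, D m b⁆ = ((m : ℂ) - (n : ℂ)) • D (n + m) (a * b)
        + (if m = -n then (((n : ℂ) ^ 3 - (n : ℂ)) / 12) else 0) • C (a * b)
  K_central : ∀ (a : A) (z : L), ⁅K a, z⁆ = 0
  C_central : ∀ (a : A) (z : L), ⁅C a, z⁆ = 0
  span_top : Submodule.span ℂ
      ({z : L | ∃ (n : ℤ) (x : g) (a : A), z = E n x a}
        ∪ {z : L | ∃ (n : ℤ) (a : A), z = D n a}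
        ∪ {z : L | ∃ a : A, z = K a}
        ∪ {z : L | ∃ a : A, z = C a}) = ⊤

namespace LoopAffVir

variable {g A L : Type*} [LieRing g] [LieAlgebra ℂ g] [CommRing A] [Algebra ℂ A]
  [LieRing L] [LieAlgebra ℂ L] (S : LoopAffVir g A L)

/-- Generators of the Cartan subalgebra `h̄ = h̊ ⊕ ℂK ⊕ ℂd₀ ⊕ ℂC ⊆ 𝔏 ⊗ 1`. -/
def cartanSet : Set L :=
  {z : L | ∃ h ∈ S.H, z = S.E 0 h 1} ∪ {S.K 1, S.D 0 1, S.C 1}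

/-- The Cartan subalgebra `h̄` of `𝔏(A)`. -/
def cartan : Submodule ℂ L := Submodule.span ℂ S.cartanSet

/-- `h ∈ h̊` as an element of `h̄`. -/
def eH (h : S.H) : S.cartan :=
  ⟨S.E 0 h 1, Submodule.subset_span (Set.mem_union_left _ ⟨(h : g), h.2, rfl⟩)⟩

/-- `K ⊗ 1` as an element of `h̄`. -/
def K1 : S.cartan :=
  ⟨S.K 1, Submodule.subset_span (Set.mem_union_right _ (by simp))⟩

/-- `d₀ ⊗ 1` as an element of `h̄`. -/
def d0 : S.cartan :=
  ⟨S.D 0 1, Submodule.subset_span (Set.mem_union_right _ (by simp))⟩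

/-- `C ⊗ 1` as an element of `h̄`. -/
def C1 : S.cartan :=
  ⟨S.C 1, Submodule.subset_span (Set.mem_union_right _ (by simp))⟩

variable (V : Type*) [AddCommGroup V] [Module ℂ V] [LieRingModule L V] [LieModule ℂ L V]

/-- The weight space of an `𝔏(A)`-module attached to `χ ∈ h̄*`. -/
def wtSpace (χ : Module.Dual ℂ S.cartan) : Submodule ℂ V where
  carrier := {v : V | ∀ h : S.cartan, ⁅(h : L), v⁆ = χ h • v}
  add_mem' := by
    intro a b ha hb h
    rw [lie_add, ha h, hb h, smul_add]
  zero_mem' := by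
    intro h
    rw [lie_zero, smul_zero]
  smul_mem' := by
    intro c v hv h
    rw [lie_smul, hv h, smul_comm]

/-- The set of weights `P(V)`. -/
def weights : Set (Module.Dual ℂ S.cartan) := {χ | S.wtSpace V χ ≠ ⊥}

/-- `V` is a weight module: it is the (direct) sum of its weight spaces. -/
def IsWeightModule : Prop := (⨆ χ : Module.Dual ℂ S.cartan, S.wtSpace V χ) = ⊤

/-- All weight spaces are finite dimensional. -/
def HasFinDimWeightSpaces : Prop :=
  ∀ χ : Module.Dual ℂ S.cartan, FiniteDimensional ℂ (S.wtSpace V χ)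

/-- Integrability: `V` is a weight module with finite dimensional weight spaces on which all
real root vectors `(x ⊗ tⁿ) ⊗ a`, `x ∈ g̊_α`, `α ∈ Δ̊`, act locally nilpotently. -/
def IsIntegrable : Prop :=
  S.IsWeightModule V ∧ S.HasFinDimWeightSpaces V ∧
    ∀ α : Module.Dual ℂ S.H, α ≠ 0 → S.rootSp α ≠ ⊥ →
      ∀ x ∈ S.rootSp α, ∀ (n : ℤ) (a : A) (v : V),
        ∃ N : ℕ, ((LieModule.toEnd ℂ L V) (S.E n x a) ^ N) v = 0

/-- The highest weight space
`M = {v ∈ V : (x ⊗ tⁿ ⊗ a) v = 0 ∀ x ∈ g̊_α, α ∈ Δ̊₊, n ∈ ℤ, a ∈ A}` for the second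
triangular decomposition. -/
def hwSpace : Submodule ℂ V where
  carrier := {v : V | ∀ α ∈ S.Δplus, ∀ x ∈ S.rootSp α, ∀ (n : ℤ) (a : A), ⁅S.E n x a, v⁆ = 0}
  add_mem' := by
    intro u w hu hw α hα x hx n a
    rw [lie_add, hu α hα x hx n a, hw α hα x hx n a, add_zero]
  zero_mem' := by
    intro α hα x hx n a
    rw [lie_zero]
  smul_mem' := by
    intro t v hv α hα x hx n a
    rw [lie_smul, hv α hα x hx n a, smul_zero]

/-- Generators of `𝔏(A)⁺ = (n₊ ⊕ Vir⁺) ⊗ A` for the natural triangular decomposition. -/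
def plusSet : Set L :=
  {z : L | ∃ n : ℤ, 0 < n ∧ ∃ (x : g) (a : A), z = S.E n x a} ∪
  {z : L | ∃ α ∈ S.Δplus, ∃ x ∈ S.rootSp α, ∃ a : A, z = S.E 0 x a} ∪
  {z : L | ∃ n : ℤ, 0 < n ∧ ∃ a : A, z = S.D n a}

/-- Generators of `𝔏(A)⁻ = (n₋ ⊕ Vir⁻) ⊗ A` for the natural triangular decomposition. -/
def minusSet : Set L :=
  {z : L | ∃ n : ℤ, n < 0 ∧ ∃ (x : g) (a : A), z = S.E n x a} ∪
  {z : L | ∃ α ∈ S.Δplus, ∃ x ∈ S.rootSp (-α), ∃ a : A, z = S.E 0 x a} ∪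
  {z : L | ∃ n : ℤ, n < 0 ∧ ∃ a : A, z = S.D n a}

/-- Generators of `𝔏(A)⁰ = h̄ ⊗ A`. -/
def cartanASet : Set L :=
  {z : L | ∃ h ∈ S.H, ∃ a : A, z = S.E 0 h a} ∪ {z : L | ∃ a : A, z = S.K a}
    ∪ {z : L | ∃ a : A, z = S.D 0 a} ∪ {z : L | ∃ a : A, z = S.C a}

/-- `𝔏(A)⁰ = h̄ ⊗ A` as a subspace of `L`. -/
def cartanA : Submodule ℂ L := Submodule.span ℂ S.cartanASet

/-- `h ⊗ a`, `h ∈ h̊`, as an element of `h̄ ⊗ A`. -/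
def eHA (h : S.H) (a : A) : S.cartanA :=
  ⟨S.E 0 h a, Submodule.subset_span
    (Set.mem_union_left _ (Set.mem_union_left _ (Set.mem_union_left _ ⟨(h : g), h.2, a, rfl⟩)))⟩

/-- `K ⊗ a` as an element of `h̄ ⊗ A`. -/
def KA (a : A) : S.cartanA :=
  ⟨S.K a, Submodule.subset_span
    (Set.mem_union_left _ (Set.mem_union_left _ (Set.mem_union_right _ ⟨a, rfl⟩)))⟩

/-- `d₀ ⊗ a` as an element of `h̄ ⊗ A`. -/
def DA0 (a : A) : S.cartanA :=
  ⟨S.D 0 a, Submodule.subset_span (Set.mem_union_left _ (Set.mem_union_right _ ⟨a, rfl⟩))⟩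

/-- `C ⊗ a` as an element of `h̄ ⊗ A`. -/
def CA (a : A) : S.cartanA :=
  ⟨S.C a, Submodule.subset_span (Set.mem_union_right _ ⟨a, rfl⟩)⟩

/-- `V` is a highest weight module with highest weight `ψ : h̄ ⊗ A → ℂ` for the natural
triangular decomposition: some nonzero vector `v` is annihilated by `𝔏(A)⁺`, is a
`ψ`-eigenvector for `h̄ ⊗ A`, and generates `V`. -/
def IsHWModule (ψ : Module.Dual ℂ S.cartanA) : Prop :=
  ∃ v : V, v ≠ 0 ∧ (∀ z ∈ S.plusSet, ⁅z, v⁆ = 0) ∧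
    (∀ h : S.cartanA, ⁅(h : L), v⁆ = ψ h • v) ∧
    ∀ W : LieSubmodule ℂ L V, v ∈ W → W = ⊤

/-- `(𝔏 ⊗ I) ⬝ V = 0`. -/
def Annihilates (I : Ideal A) : Prop :=
  ∀ a ∈ I, (∀ (n : ℤ) (x : g) (v : V), ⁅S.E n x a, v⁆ = 0) ∧
    (∀ (n : ℤ) (v : V), ⁅S.D n a, v⁆ = 0) ∧
    (∀ v : V, ⁅S.K a, v⁆ = 0) ∧ (∀ v : V, ⁅S.C a, v⁆ = 0)

/-- `(𝔏₀ ⊗ R)` kills the subspace `X`, where `𝔏₀ = (h̊ ⊗ ℂ[t,t⁻¹] ⊕ ℂK) ⋊ Vir`. -/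
def ZeroPartAnnOn (R : Ideal A) (X : Submodule ℂ V) : Prop :=
  ∀ a ∈ R, ∀ v ∈ X,
    (∀ (n : ℤ) (h : g), h ∈ S.H → ⁅S.E n h a, v⁆ = 0) ∧
    (∀ n : ℤ, ⁅S.D n a, v⁆ = 0) ∧ ⁅S.K a, v⁆ = 0 ∧ ⁅S.C a, v⁆ = 0

/-- Generators of `𝔏(A)₀ = ((h̊ ⊗ ℂ[t,t⁻¹] ⊕ ℂK) ⋊ Vir) ⊗ A`. -/
def zeroPartSet : Set L :=
  {z : L | ∃ (n : ℤ) (h : g), h ∈ S.H ∧ ∃ a : A, z = S.E n h a}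
    ∪ {z : L | ∃ a : A, z = S.K a}
    ∪ {z : L | ∃ (n : ℤ) (a : A), z = S.D n a}
    ∪ {z : L | ∃ a : A, z = S.C a}

/-- Generators of `g(A) = (g̊ ⊗ ℂ[t,t⁻¹] ⊕ ℂK ⊕ ℂd₀) ⊗ A`. -/
def gASet : Set L :=
  {z : L | ∃ (n : ℤ) (x : g) (a : A), z = S.E n x a}
    ∪ {z : L | ∃ a : A, z = S.K a} ∪ {z : L | ∃ a : A, z = S.D 0 a}

/-- Generators of `(h̊ ⊗ ℂ[t,t⁻¹] ⊕ ℂK) ⊗ A`. -/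
def heisSet : Set L :=
  {z : L | ∃ (n : ℤ) (h : g), h ∈ S.H ∧ ∃ a : A, z = S.E n h a}
    ∪ {z : L | ∃ a : A, z = S.K a}

/-- The smallest subspace of `V` containing `X` and stable under the operators in `Ops`;
this models `U(⋯) ⬝ X`. -/
def opClosure (Ops : Set L) (X : Submodule ℂ V) : Submodule ℂ V :=
  sInf {N : Submodule ℂ V | X ≤ N ∧ ∀ z ∈ Ops, ∀ v ∈ N, ⁅z, v⁆ ∈ N}

/-- The reflection `λ ↦ λ - λ(b) • β` on `h̄*`. -/
def reflMap (b : S.cartan) (β : Module.Dual ℂ S.cartan) :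
    Module.End ℂ (Module.Dual ℂ S.cartan) :=
  LinearMap.id - LinearMap.smulRight (Module.Dual.eval ℂ S.cartan b) β

/-- Given `ν⁻¹ : h̊* → h̊` (inverse of the form), the coroot
`β∨ = α∨ + (2 / ⟨α,α⟩) K ∈ h̄` of the real root `β = α + nδ`. -/
def corootOf (nu : Module.Dual ℂ S.H → S.H) (α : Module.Dual ℂ S.H) : S.cartan :=
  (2 / α (nu α)) • (S.eH (nu α) + S.K1)

/-- The (affine) Weyl group `W` of `𝔏(A)`, generated by the reflections in the real
roots `β = α + nδ`, acting on `h̄*`. -/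
def weylMonoid (nu : Module.Dual ℂ S.H → S.H)
    (ext : Module.Dual ℂ S.H →ₗ[ℂ] Module.Dual ℂ S.cartan)
    (δf : Module.Dual ℂ S.cartan) :
    Submonoid (Module.End ℂ (Module.Dual ℂ S.cartan)) :=
  Submonoid.closure {w | ∃ (α : Module.Dual ℂ S.H) (n : ℤ), α ≠ 0 ∧ S.rootSp α ≠ ⊥ ∧
    w = S.reflMap (S.corootOf nu α) (ext α + (n : ℂ) • δf)}

/-- The reflection `σ_α : h ↦ h - α(h) • α∨` on `h̊`. -/
def finReflMap (nu : Module.Dual ℂ S.H → S.H) (α : Module.Dual ℂ S.H) :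
    Module.End ℂ S.H :=
  LinearMap.id - LinearMap.smulRight (α : S.H →ₗ[ℂ] ℂ) ((2 / α (nu α)) • nu α)

/-- The finite Weyl group `W̊` of `g̊`, acting on `h̊`. -/
def finWeyl (nu : Module.Dual ℂ S.H → S.H) : Submonoid (Module.End ℂ S.H) :=
  Submonoid.closure {w | ∃ α : Module.Dual ℂ S.H, α ≠ 0 ∧ S.rootSp α ≠ ⊥ ∧
    w = S.finReflMap nu α}

/-- `ℤ[W̊(θ∨)] ⊆ h̊`: the additive group generated by the `W̊`-orbit of `θ∨`. -/
def thetaOrbitSpan (nu : Module.Dual ℂ S.H → S.H) (θ : Module.Dual ℂ S.H) :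
    AddSubgroup S.H :=
  AddSubgroup.closure {h | ∃ w ∈ S.finWeyl nu, h = w ((2 / θ (nu θ)) • nu θ)}

/-- The `d₀`-eigenspace of `V` for the eigenvalue `μ`. -/
def d0Eig (μ : ℂ) : Submodule ℂ V where
  carrier := {v : V | ⁅S.D 0 1, v⁆ = μ • v}
  add_mem' := by
    intro a b ha hb
    show ⁅S.D 0 1, a + b⁆ = μ • (a + b)
    rw [lie_add, ha, hb, smul_add]
  zero_mem' := by
    show ⁅S.D 0 1, (0 : V)⁆ = μ • (0 : V)
    rw [lie_zero, smul_zero]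
  smul_mem' := by
    intro c v hv
    show ⁅S.D 0 1, c • v⁆ = μ • c • v
    rw [lie_smul, hv, smul_comm]

end LoopAffVir

end

/-!
A real root vector tensored with an element of `A` acts locally nilpotently, so for a root `α` with
`𝔰𝔩₂`-triple `(e, h, f)` and `n ∈ ℤ` the operator `exp x exp (-y) exp x`, with `x = e ⊗ tⁿ` and
`y = f ⊗ t⁻ⁿ`, acts on `V` as the reflection in `α + nδ`. As `K ⊗ 1` acts trivially, the product
of the reflections in `α` and `α + nδ` is a translation: on vectors of weight `μ` it shifts the
`d₀`-eigenvalue by `n μ(h)`, and it commutes with `k ⊗ tᵐ ⊗ a` for `k ∈ h̊` and `m ≠ 0`. So if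
`μ ≠ 0`, the elements `a` for which `h̊ ⊗ ℂ[t, t⁻¹] ⊗ a` kills all weight spaces `μ + mδ` are
detected on finitely many of these spaces, and form a cofinite ideal.

Let `v` have weight `μ ≠ 0` and let `I` be the intersection of these ideals for the nonzero weights
among `μ`, the roots `β` and the `μ ± β`. Then either `g' ⊗ I` kills `v`, or `μ = -β` for a root
`β` and `g' ⊗ I` kills some nonzero vector `(x_β ⊗ tⁿ ⊗ b) v` with `b ∈ I`. In the second case the
vector has weight `0`, and is a lowest weight vector, hence invariant, for the `𝔰𝔩₂` of `β`.
The vectors killed by `g' ⊗ I` form a submodule, so they are all of `V` by irreducibility. If there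
is no weight `μ ≠ 0` at all, then `g'` acts by zero.
-/

section LocallyNilpotent

variable {k V : Type*} [Field k] [AddCommGroup V] [Module k V]

/-- An endomorphism is locally nilpotent if some power of it kills any given vector. -/
def IsLocallyNilpotent (x : Module.End k V) : Prop :=
  ∀ v, ∃ N : ℕ, (x ^ N) v = 0

/-- The exponential series of an endomorphism, summed at a vector. The sum is finite at a vector
killed by a power of the endomorphism, and is a junk value elsewhere. -/
noncomputable def expApply (x : Module.End k V) (v : V) : V :=
  ∑ᶠ n : ℕ, (n.factorial : k)⁻¹ • (x ^ n) v

lemma IsLocallyNilpotent.neg {x : Module.End k V} (hx : IsLocallyNilpotent x) :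
    IsLocallyNilpotent (-x) := by
  intro v
  obtain ⟨N, hN⟩ := hx v
  exact ⟨N, by rw [neg_pow, Module.End.mul_apply, hN, map_zero]⟩

lemma expApply_eq_sum {x : Module.End k V} {v : V} {N : ℕ} (h : (x ^ N) v = 0) :
    expApply x v = ∑ n ∈ Finset.range N, (n.factorial : k)⁻¹ • (x ^ n) v := by
  refine finsum_eq_sum_of_support_subset _ fun n hn ↦ ?_
  contrapose! hn
  have hNn : N ≤ n := by simpa using hn
  simp [Module.End.pow_map_zero_of_le hNn h]

lemma expApply_smul (x : Module.End k V) (c : k) (v : V) :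
    expApply x (c • v) = c • expApply x v := by
  simp only [expApply, map_smul, smul_comm _ c, smul_finsum]

lemma expApply_of_pow_three {x : Module.End k V} {v : V} (h : x (x (x v)) = 0) :
    expApply x v = v + x v + (2⁻¹ : k) • x (x v) := by
  have h3 : (x ^ 3) v = 0 := by simpa [pow_succ] using h
  simp [expApply_eq_sum h3, Finset.sum_range_succ, pow_two]

lemma eq_zero_of_expApply_eq_zero {x : Module.End k V} {v : V} (h : ∃ N : ℕ, (x ^ N) v = 0)
    (hv : expApply x v = 0) : v = 0 := by
  by_contra hne
  obtain ⟨N, hN, hN'⟩ := Nat.exists_not_and_succ_of_not_zero_of_exists (by simpa using hne) h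
  apply hN
  calc (x ^ N) v = ∑ n ∈ Finset.range (N + 1), (n.factorial : k)⁻¹ • (x ^ (N + n)) v := by
        rw [Finset.sum_range_succ', Finset.sum_eq_zero, zero_add]
        · simp
        · intro n _
          rw [Module.End.pow_map_zero_of_le (by lia) hN', smul_zero]
    _ = (x ^ N) (expApply x v) := by
        simp only [expApply_eq_sum hN', map_sum, map_smul, pow_add, Module.End.mul_apply]
    _ = 0 := by rw [hv, map_zero]

section LieModule

open Finset LieModule

variable [CharZero k] {L : Type*} [LieRing L] [LieAlgebra k L] [LieRingModule L V]
  [LieModule k L V]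

lemma inv_factorial_smul_toEnd_pow_lie (x y : L) (v : V) (n : ℕ) :
    (n.factorial : k)⁻¹ • (toEnd k L V x ^ n) ⁅y, v⁆ = ∑ ij ∈ antidiagonal n,
      ⁅(ij.1.factorial : k)⁻¹ • (LieAlgebra.ad k L x ^ ij.1) y,
        (ij.2.factorial : k)⁻¹ • (toEnd k L V x ^ ij.2) v⁆ := by
  rw [toEnd_pow_lie, Finset.smul_sum]
  refine Finset.sum_congr rfl fun ij hij ↦ ?_
  have hn : ij.1 + ij.2 = n := HasAntidiagonal.mem_antidiagonal.mp hij
  rw [← Nat.cast_smul_eq_nsmul k, smul_smul, ← hn, Nat.cast_add_choose, smul_lie, lie_smul,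
    smul_smul]
  congr 1
  have hne : ((ij.1 + ij.2).factorial : k) ≠ 0 := mod_cast Nat.factorial_ne_zero _
  field_simp

lemma expApply_toEnd_lie {x y : L} {v : V} (hy : ∃ p : ℕ, (LieAlgebra.ad k L x ^ p) y = 0)
    (hv : ∃ q : ℕ, (toEnd k L V x ^ q) v = 0) :
    expApply (toEnd k L V x) ⁅y, v⁆ =
      ⁅expApply (LieAlgebra.ad k L x) y, expApply (toEnd k L V x) v⁆ := by
  obtain ⟨p, hp⟩ := hy
  obtain ⟨q, hq⟩ := hv
  let term (ij : ℕ × ℕ) : V := ⁅(ij.1.factorial : k)⁻¹ • (LieAlgebra.ad k L x ^ ij.1) y,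
    (ij.2.factorial : k)⁻¹ • (toEnd k L V x ^ ij.2) v⁆
  have term_eq_zero : ∀ ij : ℕ × ℕ, p ≤ ij.1 ∨ q ≤ ij.2 → term ij = 0 := by
    rintro ij (h | h)
    · simp [term, Module.End.pow_map_zero_of_le h hp]
    · simp [term, Module.End.pow_map_zero_of_le h hq]
  have h0 : (toEnd k L V x ^ (p + q)) ⁅y, v⁆ = 0 := by
    have h := inv_factorial_smul_toEnd_pow_lie (k := k) x y v (p + q)
    rw [Finset.sum_eq_zero fun ij hij ↦ term_eq_zero ij ?_] at h
    · simpa [Nat.factorial_ne_zero] using h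
    · have := HasAntidiagonal.mem_antidiagonal.mp hij
      lia
  calc expApply (toEnd k L V x) ⁅y, v⁆
      = ∑ n ∈ range (p + q), ∑ ij ∈ antidiagonal n, term ij := by
        simp only [expApply_eq_sum h0, inv_factorial_smul_toEnd_pow_lie, term]
    _ = ∑ n ∈ range (p + q), ∑ ij ∈ range p ×ˢ range q with ij.1 + ij.2 = n, term ij := by
        refine sum_congr rfl fun n _ ↦ (sum_subset (fun ij hij ↦ ?_) fun ij hij hij' ↦ ?_).symm
        · exact HasAntidiagonal.mem_antidiagonal.mpr (mem_filter.mp hij).2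
        · refine term_eq_zero ij ?_
          simp only [mem_filter, mem_product, mem_range] at hij'
          have := HasAntidiagonal.mem_antidiagonal.mp hij
          lia
    _ = ∑ ij ∈ range p ×ˢ range q, term ij :=
        sum_fiberwise_of_maps_to (fun ij hij ↦ by
          simp only [mem_product, mem_range] at hij ⊢
          lia) _
    _ = ⁅expApply (LieAlgebra.ad k L x) y, expApply (toEnd k L V x) v⁆ := by
        simp only [expApply_eq_sum hp, expApply_eq_sum hq, sum_lie_sum, sum_product, term]

end LieModule

/-- The operator `exp e ∘ exp (-f) ∘ exp e` which, for an `𝔰𝔩₂`-pair `e`, `f`, lifts the reflection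
of weights. It is only meaningful where the three exponentials are, see `expApply`. -/
noncomputable def reflApply (e f : Module.End k V) (v : V) : V :=
  expApply e (expApply (-f) (expApply e v))

lemma reflApply_smul (e f : Module.End k V) (c : k) (v : V) :
    reflApply e f (c • v) = c • reflApply e f v := by
  simp only [reflApply, expApply_smul]

lemma eq_zero_of_reflApply_eq_zero {e f : Module.End k V} (he : IsLocallyNilpotent e)
    (hf : IsLocallyNilpotent f) {v : V} (hv : reflApply e f v = 0) : v = 0 :=
  eq_zero_of_expApply_eq_zero (he v) <|
    eq_zero_of_expApply_eq_zero (hf.neg _) <| eq_zero_of_expApply_eq_zero (he _) hv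

attribute [local instance 100] LieRing.ofAssociativeRing

lemma expApply_apply [CharZero k] {x : Module.End k V} (hx : IsLocallyNilpotent x)
    {y : Module.End k V} (hy : ⁅x, ⁅x, ⁅x, y⁆⁆⁆ = 0) (v : V) :
    expApply x (y v) = (y + ⁅x, y⁆ + (2⁻¹ : k) • ⁅x, ⁅x, y⁆⁆) (expApply x v) := by
  have had : expApply (LieAlgebra.ad k (Module.End k V) x) y =
      y + ⁅x, y⁆ + (2⁻¹ : k) • ⁅x, ⁅x, y⁆⁆ := expApply_of_pow_three hy
  rw [← had]
  exact expApply_toEnd_lie (x := x) ⟨3, by simpa [pow_succ] using hy⟩ (hx v)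

/-- Conjugation by `reflApply e f` fixes the operators commuting with `e` and `f`, and changes the
sign of `Z = ⁅e, f⁆ ⊗ a` when `X = e ⊗ a` and `F = f ⊗ a`. -/
lemma reflApply_apply [CharZero k] {e f : Module.End k V} (he : IsLocallyNilpotent e)
    (hf : IsLocallyNilpotent f) {W X Z F : Module.End k V} (heW : ⁅e, W⁆ = 0) (hfW : ⁅f, W⁆ = 0)
    (heZ : ⁅e, Z⁆ = -((2 : k) • X)) (heX : ⁅e, X⁆ = 0) (hfX : ⁅f, X⁆ = -Z)
    (hfZ : ⁅f, Z⁆ = (2 : k) • F) (hfF : ⁅f, F⁆ = 0) (c : k) (v : V) :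
    reflApply e f ((W + c • Z) v) = (W - c • Z) (reflApply e f v) := by
  have h₁ (u : V) : expApply e ((W + c • Z) u) = (W + c • Z - (2 * c) • X) (expApply e u) := by
    rw [expApply_apply he (by simp [heW, heZ, heX])]
    simp only [lie_add, heW, lie_smul, heZ, smul_neg, zero_add, lie_neg, heX, smul_zero, neg_zero,
      add_zero, LinearMap.add_apply, LinearMap.smul_apply, LinearMap.neg_apply,
      LinearMap.sub_apply]
    module
  have h₂ (u : V) : expApply (-f) ((W + c • Z - (2 * c) • X) u) =
      (W - c • Z - (2 * c) • X) (expApply (-f) u) := by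
    rw [expApply_apply hf.neg (by simp [hfW, hfZ, hfX, hfF])]
    simp only [lie_sub, lie_add, neg_lie, hfW, neg_zero, lie_smul, hfZ, smul_neg, zero_add, hfX,
      neg_neg, lie_neg, hfF, smul_zero, sub_neg_eq_add, LinearMap.add_apply, LinearMap.sub_apply,
      LinearMap.smul_apply, LinearMap.neg_apply]
    module
  have h₃ (u : V) : expApply e ((W - c • Z - (2 * c) • X) u) = (W - c • Z) (expApply e u) := by
    rw [expApply_apply he (by simp [heW, heZ, heX])]
    simp only [lie_sub, heW, lie_smul, heZ, smul_neg, sub_neg_eq_add, zero_add, heX, smul_zero,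
      sub_zero, add_zero, LinearMap.add_apply, LinearMap.sub_apply, LinearMap.smul_apply]
    module
  simp only [reflApply, h₁, h₂, h₃]

section SlTwo

open LieModule

variable {L : Type*} [LieRing L] [LieAlgebra k L] [LieRingModule L V]
  [LieModule k L V] {h e f : L} {t : IsSl2Triple h e f} {v : V} {r : k}

lemma lie_h_toEnd_e_pow (t : IsSl2Triple h e f) (hv : ⁅h, v⁆ = r • v) (n : ℕ) :
    ⁅h, (toEnd k L V e ^ n) v⁆ = (r + 2 * n) • (toEnd k L V e ^ n) v := by
  induction n with
  | zero => simpa using hv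
  | succ n ih =>
    rw [pow_succ', Module.End.mul_apply, toEnd_apply_apply, leibniz_lie, t.lie_h_e_smul k, ih,
      smul_lie, lie_smul]
    push_cast
    module

variable [CharZero k]

lemma exists_nat_eq_and_toEnd_f_pow_succ_eq_zero (P : t.HasPrimitiveVectorWith v r)
    (hf : ∃ N : ℕ, (toEnd k L V f ^ N) v = 0) :
    ∃ n : ℕ, r = n ∧ (toEnd k L V f ^ (n + 1)) v = 0 := by
  obtain ⟨n, hn, hn'⟩ :=
    Nat.exists_not_and_succ_of_not_zero_of_exists (by simpa using P.ne_zero) hf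
  have hlie := P.lie_e_pow_succ_toEnd_f n
  rw [hn', lie_zero, eq_comm, smul_eq_zero_iff_left hn, mul_eq_zero, sub_eq_zero] at hlie
  exact ⟨n, hlie.resolve_left n.cast_add_one_ne_zero, hn'⟩

lemma exists_int_eq_of_isLocallyNilpotent (t : IsSl2Triple h e f)
    (he : IsLocallyNilpotent (toEnd k L V e)) (hf : IsLocallyNilpotent (toEnd k L V f))
    (hv : ⁅h, v⁆ = r • v) (hv0 : v ≠ 0) : ∃ z : ℤ, r = z := by
  obtain ⟨n, hn, hn'⟩ :=
    Nat.exists_not_and_succ_of_not_zero_of_exists (by simpa using hv0) (he v)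
  have P : t.HasPrimitiveVectorWith ((toEnd k L V e ^ n) v) (r + 2 * n) :=
    ⟨hn, lie_h_toEnd_e_pow t hv n, by rwa [pow_succ', Module.End.mul_apply] at hn'⟩
  obtain ⟨m, hm, -⟩ := exists_nat_eq_and_toEnd_f_pow_succ_eq_zero P (hf _)
  exact ⟨m - 2 * n, by push_cast; linear_combination hm⟩

end SlTwo

end LocallyNilpotent

lemma lie_lie_of_eq {L V : Type*} [LieRing L] [AddCommGroup V] [LieRingModule L V] {y z w : L}
    (h : ⁅y, z⁆ = w) (v : V) : ⁅y, ⁅z, v⁆⁆ = ⁅w, v⁆ + ⁅z, ⁅y, v⁆⁆ := by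
  rw [← h, leibniz_lie]

namespace LoopAffVir

variable {g A L : Type*} [LieRing g] [LieAlgebra ℂ g] [CommRing A] [Algebra ℂ A]
  [LieRing L] [LieAlgebra ℂ L] (S : LoopAffVir g A L)

instance : S.H.IsCartanSubalgebra := S.isCartan

/-- Root vectors `x i ∈ g̊_α`, `y i ∈ g̊_{-α}` for the roots `α = root i` of `g̊`, normalized so
that `x i`, `y i` and the coroot `h i` form an `𝔰𝔩₂`-triple. -/
structure RootVectors (ι : Type*) where
  root : ι → Module.Dual ℂ S.H
  x : ι → g
  y : ι → g
  h : ι → S.H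
  isSl2Triple : ∀ i, IsSl2Triple (h i : g) (x i) (y i)
  x_mem : ∀ i, x i ∈ S.rootSp (root i)
  y_mem : ∀ i, y i ∈ S.rootSp (-root i)
  coe_mem : ∀ k : S.H, (k : g) ∈ S.rootSp 0
  root_injective : Function.Injective root
  span_h : Submodule.span ℂ (Set.range h) = ⊤
  span_x : S.H.toSubmodule ⊔ Submodule.span ℂ (Set.range x) = ⊤

open LieAlgebra LieAlgebra.IsKilling in
lemma nonempty_rootVectors [FiniteDimensional ℂ g] [IsKilling ℂ g] :
    Nonempty (S.RootVectors S.H.root) := by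
  choose h x y ht hx hy using fun α : S.H.root ↦
    exists_isSl2Triple_of_weight_isNonZero (S.H.isNonZero_coe_root α)
  have h_eq (α : S.H.root) : h α = coroot (α : LieModule.Weight ℂ S.H g) :=
    (ht α).h_eq_coroot (S.H.isNonZero_coe_root α) (hx α) (hy α)
  refine ⟨{
    root := fun α ↦ LieModule.Weight.toLinear ℂ S.H g α
    x := x
    y := y
    h := fun α ↦ coroot (α : LieModule.Weight ℂ S.H g)
    isSl2Triple := fun α ↦ h_eq α ▸ ht α
    x_mem := fun α ↦ (S.rootSp_def _ _).mpr (lie_eq_smul_of_mem_rootSpace (hx α))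
    y_mem := fun α ↦ (S.rootSp_def _ _).mpr (lie_eq_smul_of_mem_rootSpace (hy α))
    coe_mem := fun k ↦ (S.rootSp_def _ _).mpr fun l ↦ by
      rw [← LieSubalgebra.coe_bracket, trivial_lie_zero S.H S.H l k]
      simp
    root_injective := fun α β hαβ ↦ Subtype.ext (DFunLike.ext _ _ (LinearMap.congr_fun hαβ))
    span_h := RootPairing.IsRootSystem.span_coroot_eq_top (P := rootSystem S.H)
    span_x := ?_ }⟩
  rw [eq_top_iff, ← LieSubmodule.top_toSubmodule (R := ℂ) (L := S.H) (M := g),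
    ← cartan_sup_iSup_rootSpace_eq_top (H := S.H)]
  simp only [LieSubmodule.sup_toSubmodule, LieSubmodule.iSup_toSubmodule]
  refine sup_le_sup le_rfl (iSup₂_le fun α hα z hz ↦ ?_)
  let α' : S.H.root := ⟨α, by simpa using hα⟩
  have hne : (⟨x α', hx α'⟩ : rootSpace S.H α) ≠ 0 :=
    fun h0 ↦ (ht α').e_ne_zero (congrArg Subtype.val h0)
  obtain ⟨c, hc⟩ :=
    (finrank_eq_one_iff_of_nonzero' _ hne).mp (finrank_rootSpace_eq_one α hα) ⟨z, hz⟩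
  have hcz : c • x α' = z := congrArg Subtype.val hc
  exact hcz ▸ Submodule.smul_mem _ _ (Submodule.subset_span ⟨_, rfl⟩)

variable {S} {α β : Module.Dual ℂ S.H} {x y : g}

lemma lie_mem_rootSp_add (hx : x ∈ S.rootSp α) (hy : y ∈ S.rootSp β) :
    ⁅x, y⁆ ∈ S.rootSp (α + β) := by
  rw [rootSp_def] at hx hy ⊢
  intro h
  rw [leibniz_lie, hx, hy, smul_lie, lie_smul, LinearMap.add_apply, add_smul]

lemma form_eq_zero_of_mem_rootSp (hx : x ∈ S.rootSp α) (hy : y ∈ S.rootSp β) (h : α + β ≠ 0) :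
    S.form x y = 0 := by
  obtain ⟨k, hk⟩ : ∃ k, (α + β) k ≠ 0 := not_forall.mp fun h0 ↦ h (LinearMap.ext h0)
  rw [rootSp_def] at hx hy
  have hinv := S.form_invariant x k y
  rw [← lie_skew, hx, hy, map_neg, map_smul, map_smul, LinearMap.neg_apply, LinearMap.smul_apply,
    smul_eq_mul, smul_eq_mul] at hinv
  refine (mul_eq_zero.mp ?_).resolve_left hk
  rw [LinearMap.add_apply]
  linear_combination -hinv

lemma mem_H_of_mem_rootSp_zero (hx : x ∈ S.rootSp 0) : x ∈ S.H := by
  rw [← S.isCartan.self_normalizing, LieSubalgebra.mem_normalizer_iff']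
  intro h hh
  rw [(S.rootSp_def _ _).mp hx ⟨h, hh⟩]
  simp

namespace RootVectors

variable {ι : Type*} (R : S.RootVectors ι)

lemma lie_hx (i : ι) (k : S.H) : ⁅(k : g), R.x i⁆ = R.root i k • R.x i :=
  (S.rootSp_def _ _).mp (R.x_mem i) k

lemma lie_hy (i : ι) (k : S.H) : ⁅(k : g), R.y i⁆ = -(R.root i k • R.y i) := by
  simpa using (S.rootSp_def _ _).mp (R.y_mem i) k

include R in
lemma lie_hh (k l : S.H) : ⁅(k : g), (l : g)⁆ = 0 := by
  simpa using (S.rootSp_def _ _).mp (R.coe_mem l) k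

lemma root_h (i : ι) : R.root i (R.h i) = 2 := by
  refine smul_left_injective ℂ (R.isSl2Triple i).e_ne_zero ?_
  simp only [← R.lie_hx, (R.isSl2Triple i).lie_h_e_smul ℂ]

lemma root_ne_zero (i : ι) : R.root i ≠ 0 := fun h ↦ by
  simpa [h] using R.root_h i

lemma exists_apply_h_ne_zero (hα : α ≠ 0) : ∃ i, α (R.h i) ≠ 0 := by
  by_contra! h
  exact hα (LinearMap.ext_on_range R.span_h h)

lemma ext_linearMap {M : Type*} [AddCommGroup M] [Module ℂ M] {f f' : g →ₗ[ℂ] M}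
    (hH : ∀ k : S.H, f k = f' k) (hx : ∀ i, f (R.x i) = f' (R.x i)) : f = f' := by
  rw [← LinearMap.eqLocus_eq_top, eq_top_iff, ← R.span_x]
  refine sup_le (fun k hk ↦ hH ⟨k, hk⟩) (Submodule.span_le.mpr ?_)
  rintro _ ⟨i, rfl⟩
  exact hx i

include R in
lemma nonempty_index [Nontrivial g] : Nonempty ι := by
  by_contra h
  rw [not_nonempty_iff] at h
  have hH : (⊤ : Submodule ℂ S.H) = ⊥ := by
    rw [← R.span_h, Set.range_eq_empty, Submodule.span_empty]
  obtain ⟨z, hz⟩ := exists_ne (0 : g)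
  have hid : (LinearMap.id : g →ₗ[ℂ] g) = 0 := R.ext_linearMap (fun k ↦ by
    have hk : k = 0 := by simpa [hH] using Submodule.mem_top (R := ℂ) (x := k)
    simp [hk]) isEmptyElim
  exact hz (LinearMap.congr_fun hid z)

include R in
lemma exists_form_ne_zero (i : ι) : ∃ k l : S.H, S.form k l ≠ 0 := by
  by_contra! h
  have h0 : S.form (R.h i) = 0 := R.ext_linearMap (h _) fun j ↦
    form_eq_zero_of_mem_rootSp (R.coe_mem _) (R.x_mem j) (by simpa using R.root_ne_zero j)
  exact (R.isSl2Triple i).h_ne_zero (S.form_nondeg _ (LinearMap.congr_fun h0))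

end RootVectors

end LoopAffVir

namespace LoopAffVir

open LieModule

variable {g A L : Type*} [LieRing g] [LieAlgebra ℂ g] [CommRing A] [Algebra ℂ A]
  [LieRing L] [LieAlgebra ℂ L] (S : LoopAffVir g A L)

lemma lie_E_zero_E (n : ℤ) (x y : g) (a b : A) :
    ⁅S.E 0 x a, S.E n y b⁆ = S.E n ⁅x, y⁆ (a * b) := by
  simp [S.lie_EE]

lemma lie_E_D (n m : ℤ) (x : g) (a b : A) :
    ⁅S.E n x a, S.D m b⁆ = -((n : ℂ) • S.E (n + m) x (b * a)) := by
  rw [← lie_skew, S.lie_DE]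

lemma lie_D_zero_D (n : ℤ) (a b : A) : ⁅S.D 0 a, S.D n b⁆ = (n : ℂ) • S.D n (a * b) := by
  simp [S.lie_DD]

variable (V : Type*) [AddCommGroup V] [Module ℂ V] [LieRingModule L V] [LieModule ℂ L V]

/-- The joint eigenspace of `h̊`, `d₀` and `C` for the eigenvalues `μ`, `ν` and `γ`. When `K` acts
trivially, these are the weight spaces of the module. -/
def layer (γ : ℂ) (μ : Module.Dual ℂ S.H) (ν : ℂ) : Submodule ℂ V :=
  (⨅ h : S.H, (toEnd ℂ L V (S.E 0 h 1)).eigenspace (μ h)) ⊓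
    (toEnd ℂ L V (S.D 0 1)).eigenspace ν ⊓ (toEnd ℂ L V (S.C 1)).eigenspace γ

/-- The sum of the layers of weight `μ + mδ`, `m ∈ ℤ`, through the layer of `d₀`-eigenvalue `ν`. -/
def string (γ ν : ℂ) (μ : Module.Dual ℂ S.H) : Submodule ℂ V :=
  ⨆ m : ℤ, S.layer V γ μ (ν + m)

variable {S V} {γ ν : ℂ} {μ β : Module.Dual ℂ S.H} {v : V}

lemma mem_layer : v ∈ S.layer V γ μ ν ↔
    (∀ h : S.H, ⁅S.E 0 h 1, v⁆ = μ h • v) ∧ ⁅S.D 0 1, v⁆ = ν • v ∧ ⁅S.C 1, v⁆ = γ • v := by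
  simp [layer, and_assoc]

lemma E_mem_layer {x : g} (hx : x ∈ S.rootSp β) (n : ℤ) (a : A) (hv : v ∈ S.layer V γ μ ν) :
    ⁅S.E n x a, v⁆ ∈ S.layer V γ (μ + β) (ν + n) := by
  rw [mem_layer] at hv ⊢
  rw [S.rootSp_def] at hx
  refine ⟨fun h ↦ ?_, ?_, ?_⟩
  · rw [lie_lie_of_eq (S.lie_E_zero_E n h x 1 a), hx, hv.1, one_mul, map_smul,
      LinearMap.smul_apply, smul_lie, lie_smul, LinearMap.add_apply, add_smul, add_comm]
  · rw [lie_lie_of_eq (S.lie_DE 0 n x 1 a), hv.2.1, one_mul, add_zero, smul_lie, lie_smul, add_smul,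
      add_comm]
  · rw [lie_lie_of_eq (S.C_central 1 _), hv.2.2, zero_lie, zero_add, lie_smul]

lemma D_mem_layer (n : ℤ) (a : A) (hv : v ∈ S.layer V γ μ ν) :
    ⁅S.D n a, v⁆ ∈ S.layer V γ μ (ν + n) := by
  rw [mem_layer] at hv ⊢
  refine ⟨fun h ↦ ?_, ?_, ?_⟩
  · rw [lie_lie_of_eq (S.lie_E_D 0 n h 1 a), hv.1]
    simp
  · rw [lie_lie_of_eq (S.lie_D_zero_D n 1 a), hv.2.1, one_mul, smul_lie, lie_smul, add_smul,
      add_comm]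
  · rw [lie_lie_of_eq (S.C_central 1 _), hv.2.2, zero_lie, zero_add, lie_smul]

lemma mem_of_mem_string {N : Submodule ℂ V} (h : ∀ m : ℤ, ∀ v ∈ S.layer V γ μ (ν + m), v ∈ N)
    (hv : v ∈ S.string V γ ν μ) : v ∈ N :=
  (iSup_le h : S.string V γ ν μ ≤ N) hv

lemma layer_add_intCast_le_string (m : ℤ) : S.layer V γ μ (ν + m) ≤ S.string V γ ν μ :=
  le_iSup (fun m : ℤ ↦ S.layer V γ μ (ν + m)) m

lemma layer_le_string : S.layer V γ μ ν ≤ S.string V γ ν μ := by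
  simpa using layer_add_intCast_le_string (V := V) (γ := γ) (ν := ν) (μ := μ) 0

lemma E_zero_of_mem_string (h : S.H) (hv : v ∈ S.string V γ ν μ) :
    ⁅S.E 0 h 1, v⁆ = μ h • v :=
  Module.End.mem_eigenspace_iff.mp <| mem_of_mem_string
    (N := (toEnd ℂ L V (S.E 0 h 1)).eigenspace (μ h))
    (fun _ _ hv ↦ Module.End.mem_eigenspace_iff.mpr ((mem_layer.mp hv).1 h)) hv

lemma E_mem_string {x : g} (hx : x ∈ S.rootSp β) (n : ℤ) (a : A) (hv : v ∈ S.string V γ ν μ) :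
    ⁅S.E n x a, v⁆ ∈ S.string V γ ν (μ + β) := by
  refine mem_of_mem_string (N := (S.string V γ ν (μ + β)).comap (toEnd ℂ L V (S.E n x a)))
    (fun m v hv ↦ layer_add_intCast_le_string (m + n) ?_) hv
  simpa [add_assoc] using E_mem_layer hx n a hv

lemma D_mem_string (n : ℤ) (a : A) (hv : v ∈ S.string V γ ν μ) :
    ⁅S.D n a, v⁆ ∈ S.string V γ ν μ := by
  refine mem_of_mem_string (N := (S.string V γ ν μ).comap (toEnd ℂ L V (S.D n a)))
    (fun m v hv ↦ layer_add_intCast_le_string (m + n) ?_) hv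
  simpa [add_assoc] using D_mem_layer n a hv

lemma exists_layer_le_wtSpace (hK : ∀ v : V, ⁅S.K 1, v⁆ = 0) (hv : v ∈ S.layer V γ μ ν)
    (hv0 : v ≠ 0) : ∃ χ, S.layer V γ μ ν ≤ S.wtSpace V χ := by
  obtain ⟨φ, hφ⟩ := Module.Projective.exists_dual_eq_one ℂ hv0
  let χ : Module.Dual ℂ L := φ ∘ₗ (toEnd ℂ L V : L →ₗ[ℂ] Module.End ℂ V).flip v
  suffices h : ∀ u ∈ S.layer V γ μ ν, ∀ z ∈ S.cartan, ⁅z, u⁆ = χ z • u from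
    ⟨χ ∘ₗ S.cartan.subtype, fun u hu z ↦ h u hu z z.2⟩
  intro u hu z hz
  have eq_of_smul {z : L} {c : ℂ} (hzv : ⁅z, v⁆ = c • v) (hzu : ⁅z, u⁆ = c • u) :
      ⁅z, u⁆ = χ z • u := by
    have hc : χ z = c := by simp [χ, hzv, hφ]
    rw [hzu, hc]
  rw [mem_layer] at hv hu
  induction hz using Submodule.span_induction with
  | mem z hz =>
    rcases hz with ⟨h, hh, rfl⟩ | rfl | rfl | rfl
    · exact eq_of_smul (hv.1 ⟨h, hh⟩) (hu.1 ⟨h, hh⟩)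
    · exact eq_of_smul (c := 0) (by simp [hK]) (by simp [hK])
    · exact eq_of_smul hv.2.1 hu.2.1
    · exact eq_of_smul hv.2.2 hu.2.2
  | zero => simp
  | add y z _ _ hy hz => rw [add_lie, hy, hz, map_add, add_smul]
  | smul t z _ hz => rw [smul_lie, hz, map_smul, smul_assoc]

lemma finiteDimensional_layer (hfin : S.HasFinDimWeightSpaces V) (hK : ∀ v : V, ⁅S.K 1, v⁆ = 0) :
    FiniteDimensional ℂ (S.layer V γ μ ν) := by
  by_cases hbot : S.layer V γ μ ν = ⊥
  · rw [hbot]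
    infer_instance
  obtain ⟨v, hv, hv0⟩ := Submodule.exists_mem_ne_zero_of_ne_bot hbot
  obtain ⟨χ, hχ⟩ := exists_layer_le_wtSpace hK hv hv0
  have := hfin χ
  exact Submodule.finiteDimensional_of_le hχ

lemma exists_wtSpace_le_layer (χ : Module.Dual ℂ S.cartan) :
    ∃ γ μ ν, S.wtSpace V χ ≤ S.layer V γ μ ν := by
  let μ : Module.Dual ℂ S.H :=
    { toFun := fun h ↦ χ (S.eH h)
      map_add' := fun h k ↦ by
        rw [← map_add]
        exact congrArg χ (Subtype.ext (by simp [eH]))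
      map_smul' := fun c h ↦ by
        rw [RingHom.id_apply, ← map_smul]
        exact congrArg χ (Subtype.ext (by simp [eH])) }
  exact ⟨χ S.C1, μ, χ S.d0, fun v hv ↦ mem_layer.mpr ⟨fun h ↦ hv (S.eH h), hv S.d0, hv S.C1⟩⟩

lemma E_zero_lie_eq_zero_of_layer_eq_bot (hV : S.IsWeightModule V)
    (hlayer : ∀ γ μ ν, μ ≠ 0 → S.layer V γ μ ν = ⊥) (h : S.H) (v : V) : ⁅S.E 0 h 1, v⁆ = 0 := by
  have hker : (⨆ χ, S.wtSpace V χ) ≤ LinearMap.ker (toEnd ℂ L V (S.E 0 h 1)) := by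
    refine iSup_le fun χ v hv ↦ LinearMap.mem_ker.mpr ?_
    obtain ⟨γ, μ, ν, hχ⟩ := exists_wtSpace_le_layer (V := V) χ
    rcases eq_or_ne μ 0 with rfl | hμ
    · simpa using (mem_layer.mp (hχ hv)).1 h
    · have hv0 : v ∈ (⊥ : Submodule ℂ V) := hlayer γ μ ν hμ ▸ hχ hv
      rw [(Submodule.mem_bot ℂ).mp hv0, map_zero]
  exact hker (hV ▸ Submodule.mem_top)

end LoopAffVir

namespace LoopAffVir.RootVectors

open LieModule

variable {g A L : Type*} [LieRing g] [LieAlgebra ℂ g] [CommRing A] [Algebra ℂ A]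
  [LieRing L] [LieAlgebra ℂ L] {S : LoopAffVir g A L} {ι : Type*} (R : S.RootVectors ι)

lemma lie_E_x_h (i : ι) (n k : ℤ) (h : S.H) (a b : A) :
    ⁅S.E n (R.x i) a, S.E k h b⁆ = -(R.root i h • S.E (n + k) (R.x i) (a * b)) := by
  rw [S.lie_EE, ← lie_skew, R.lie_hx, form_eq_zero_of_mem_rootSp (R.x_mem i) (R.coe_mem h)]
  · simp
  · simpa using R.root_ne_zero i

lemma lie_E_y_h (i : ι) (n k : ℤ) (h : S.H) (a b : A) :
    ⁅S.E n (R.y i) a, S.E k h b⁆ = R.root i h • S.E (n + k) (R.y i) (a * b) := by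
  rw [S.lie_EE, ← lie_skew, R.lie_hy, form_eq_zero_of_mem_rootSp (R.y_mem i) (R.coe_mem h)]
  · simp
  · simpa using R.root_ne_zero i

lemma lie_E_x_x (i : ι) (n k : ℤ) (a b : A) : ⁅S.E n (R.x i) a, S.E k (R.x i) b⁆ = 0 := by
  rw [S.lie_EE, lie_self, form_eq_zero_of_mem_rootSp (R.x_mem i) (R.x_mem i)]
  · simp
  · simpa [← two_smul ℂ] using R.root_ne_zero i

lemma lie_E_y_y (i : ι) (n k : ℤ) (a b : A) : ⁅S.E n (R.y i) a, S.E k (R.y i) b⁆ = 0 := by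
  rw [S.lie_EE, lie_self, form_eq_zero_of_mem_rootSp (R.y_mem i) (R.y_mem i)]
  · simp
  · simpa [← two_smul ℂ] using R.root_ne_zero i

lemma lie_E_zero_x_y (i : ι) (n : ℤ) (a b : A) :
    ⁅S.E 0 (R.x i) a, S.E n (R.y i) b⁆ = S.E n (R.h i) (a * b) := by
  rw [lie_E_zero_E, (R.isSl2Triple i).lie_e_f]

variable {V : Type*} [AddCommGroup V] [Module ℂ V] [LieRingModule L V] [LieModule ℂ L V]
  (hInt : S.IsIntegrable V) (hK : ∀ v : V, ⁅S.K 1, v⁆ = 0) (i : ι)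

include hInt in
lemma isLocallyNilpotent_E_x (n : ℤ) (a : A) :
    IsLocallyNilpotent (toEnd ℂ L V (S.E n (R.x i) a)) :=
  hInt.2.2 (R.root i) (R.root_ne_zero i)
    ((Submodule.ne_bot_iff _).mpr ⟨R.x i, R.x_mem i, (R.isSl2Triple i).e_ne_zero⟩)
    (R.x i) (R.x_mem i) n a

include hInt in
lemma isLocallyNilpotent_E_y (n : ℤ) (a : A) :
    IsLocallyNilpotent (toEnd ℂ L V (S.E n (R.y i) a)) :=
  hInt.2.2 (-R.root i) (neg_ne_zero.mpr (R.root_ne_zero i))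
    ((Submodule.ne_bot_iff _).mpr ⟨R.y i, R.y_mem i, (R.isSl2Triple i).f_ne_zero⟩)
    (R.y i) (R.y_mem i) n a

variable {i} in
lemma isSl2Triple_E_zero (h0 : S.E 0 (R.h i) 1 ≠ 0) :
    IsSl2Triple (S.E 0 (R.h i) 1) (S.E 0 (R.x i) 1) (S.E 0 (R.y i) 1) where
  h_ne_zero := h0
  lie_e_f := by rw [R.lie_E_zero_x_y, one_mul]
  lie_h_e_nsmul := by
    rw [lie_E_zero_E, (R.isSl2Triple i).lie_h_e_nsmul, map_nsmul, one_mul, LinearMap.smul_apply]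
  lie_h_f_nsmul := by
    rw [lie_E_zero_E, (R.isSl2Triple i).lie_h_f_nsmul, map_neg, map_nsmul, one_mul,
      LinearMap.neg_apply, LinearMap.smul_apply]

/-- The reflection in the real root `α_i + nδ`, acting on an integrable module. -/
noncomputable def refl (n : ℤ) (v : V) : V :=
  reflApply (toEnd ℂ L V (S.E n (R.x i) 1)) (toEnd ℂ L V (S.E (-n) (R.y i) 1)) v

variable {i}

lemma refl_smul (n : ℤ) (c : ℂ) (v : V) : R.refl i n (c • v) = c • R.refl i n v :=
  reflApply_smul _ _ _ _

include hInt in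
lemma eq_zero_of_refl_eq_zero {n : ℤ} {v : V} (hv : R.refl i n v = 0) : v = 0 :=
  eq_zero_of_reflApply_eq_zero (R.isLocallyNilpotent_E_x hInt i n 1)
    (R.isLocallyNilpotent_E_y hInt i (-n) 1) hv

attribute [local instance 100] LieRing.ofAssociativeRing

include hK in
lemma lie_toEnd_E_y_x {k : ℤ} {a : A} (hka : k ≠ 0 ∨ a = 1) (n : ℤ) :
    ⁅toEnd ℂ L V (S.E (-n) (R.y i) 1), toEnd ℂ L V (S.E (n + k) (R.x i) a)⁆ =
      -toEnd ℂ L V (S.E k (R.h i) a) := by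
  have hKa : toEnd ℂ L V ((if n + k = - -n then ((-n : ℤ) : ℂ) * S.form (R.y i) (R.x i) else 0) •
      S.K a) = 0 := by
    rcases hka with hk | rfl
    · rw [if_neg (by lia), zero_smul, map_zero]
    · ext u
      rw [toEnd_apply_apply, smul_lie, hK, smul_zero, LinearMap.zero_apply]
  rw [← LieHom.map_lie, S.lie_EE, one_mul, map_add, hKa, add_zero, neg_add_cancel_left,
    ← lie_skew, (R.isSl2Triple i).lie_e_f, map_neg, LinearMap.neg_apply, map_neg]

include hInt hK in
/-- The reflection turns `Y` into `Y - c • (h_i ⊗ tᵏ ⊗ a)` for every `Y` which pairs with the two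
root vectors like an element `h ⊗ tᵏ ⊗ a` with `α_i(h) = c`. -/
lemma lie_refl {k : ℤ} {a : A} (hka : k ≠ 0 ∨ a = 1) {n : ℤ} {Y : L} {c : ℂ}
    (hx : ⁅S.E n (R.x i) 1, Y⁆ = -(c • S.E (n + k) (R.x i) a))
    (hy : ⁅S.E (-n) (R.y i) 1, Y⁆ = c • S.E (-n + k) (R.y i) a) (v : V) :
    ⁅Y, R.refl i n v⁆ = R.refl i n (⁅Y, v⁆ - c • ⁅S.E k (R.h i) a, v⁆) := by
  have h := reflApply_apply (R.isLocallyNilpotent_E_x hInt i n 1)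
    (R.isLocallyNilpotent_E_y hInt i (-n) 1)
    (W := toEnd ℂ L V (Y - (c / 2) • S.E k (R.h i) a))
    (X := toEnd ℂ L V (S.E (n + k) (R.x i) a)) (Z := toEnd ℂ L V (S.E k (R.h i) a))
    (F := toEnd ℂ L V (S.E (-n + k) (R.y i) a))
    (by rw [← LieHom.map_lie, lie_sub, lie_smul, hx, R.lie_E_x_h, R.root_h, one_mul,
      smul_neg, smul_smul, div_mul_cancel₀ c two_ne_zero, sub_self, map_zero])
    (by rw [← LieHom.map_lie, lie_sub, lie_smul, hy, R.lie_E_y_h, R.root_h, one_mul,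
      smul_smul, div_mul_cancel₀ c two_ne_zero, sub_self, map_zero])
    (by rw [← LieHom.map_lie, R.lie_E_x_h, R.root_h, one_mul, map_neg, map_smul])
    (by rw [← LieHom.map_lie, R.lie_E_x_x, map_zero])
    (R.lie_toEnd_E_y_x hK hka n)
    (by rw [← LieHom.map_lie, R.lie_E_y_h, R.root_h, one_mul, map_smul])
    (by rw [← LieHom.map_lie, R.lie_E_y_y, map_zero]) (-(c / 2)) v
  simp only [neg_smul, sub_neg_eq_add, LinearMap.add_apply, LinearMap.neg_apply,
    LinearMap.smul_apply, toEnd_apply_apply, sub_lie, smul_lie, sub_add_cancel] at h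
  rw [refl, ← h, refl]
  congr 1
  module

include hInt hK in
lemma lie_E_refl {k : ℤ} {a : A} (hka : k ≠ 0 ∨ a = 1) (n : ℤ) (h : S.H) (v : V) :
    ⁅S.E k h a, R.refl i n v⁆ =
      R.refl i n (⁅S.E k h a, v⁆ - R.root i h • ⁅S.E k (R.h i) a, v⁆) :=
  R.lie_refl hInt hK hka (by rw [R.lie_E_x_h, one_mul]) (by rw [R.lie_E_y_h, one_mul]) v

variable {γ ν : ℂ} {μ : Module.Dual ℂ S.H} {v : V}

include hInt hK in
lemma refl_mem_layer (n : ℤ) (hv : v ∈ S.layer V γ μ ν) :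
    R.refl i n v ∈ S.layer V γ (μ - μ (R.h i) • R.root i) (ν - n * μ (R.h i)) := by
  rw [mem_layer] at hv ⊢
  refine ⟨fun h ↦ ?_, ?_, ?_⟩
  · rw [R.lie_E_refl hInt hK (.inr rfl), hv.1, hv.1, ← refl_smul]
    congr 1
    simp only [LinearMap.sub_apply, LinearMap.smul_apply, smul_eq_mul]
    module
  · rw [R.lie_refl hInt hK (k := 0) (c := n) (.inr rfl) (by simp [lie_E_D])
      (by simp [lie_E_D]), hv.2.1, hv.1, ← refl_smul]
    congr 1
    module
  · rw [R.lie_refl hInt hK (k := 0) (a := 1) (c := 0) (.inr rfl)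
      (by rw [← lie_skew, S.C_central]; simp) (by rw [← lie_skew, S.C_central]; simp),
      hv.2.2, ← refl_smul, zero_smul, sub_zero]

include hInt hK in
lemma E_lie_eq_zero_of_refl (n : ℤ) {k : ℤ} (hk : k ≠ 0) {a : A}
    (H : ∀ h : S.H, ∀ u ∈ S.layer V γ (μ - μ (R.h i) • R.root i) (ν - n * μ (R.h i)),
      ⁅S.E k h a, u⁆ = 0) (h : S.H) (hv : v ∈ S.layer V γ μ ν) : ⁅S.E k h a, v⁆ = 0 := by
  have key (h : S.H) : ⁅S.E k h a, v⁆ = R.root i h • ⁅S.E k (R.h i) a, v⁆ := by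
    refine sub_eq_zero.mp (R.eq_zero_of_refl_eq_zero (i := i) (n := n) hInt ?_)
    rw [← R.lie_E_refl hInt hK (.inl hk), H h _ (R.refl_mem_layer hInt hK n hv)]
  have hi := key (R.h i)
  rw [R.root_h, two_smul, left_eq_add] at hi
  rw [key, hi, smul_zero]

include hInt hK in
/-- The reflections in `α_i` and in `α_i + nδ` compose to a translation. -/
lemma E_lie_eq_zero_of_translate (i : ι) (n : ℤ) {k : ℤ} (hk : k ≠ 0) {a : A}
    (H : ∀ h : S.H, ∀ u ∈ S.layer V γ μ (ν - n * μ (R.h i)), ⁅S.E k h a, u⁆ = 0) (h : S.H)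
    (hv : v ∈ S.layer V γ μ ν) : ⁅S.E k h a, v⁆ = 0 := by
  refine R.E_lie_eq_zero_of_refl (i := i) hInt hK n hk (fun h u hu ↦ ?_) h hv
  refine R.E_lie_eq_zero_of_refl (i := i) hInt hK 0 hk (fun h w hw ↦ H h w ?_) h hu
  convert hw using 1
  congr 1
  · simp only [LinearMap.sub_apply, LinearMap.smul_apply, R.root_h, smul_eq_mul]
    module
  · simp

end LoopAffVir.RootVectors

lemma isCofiniteIdeal_iff_cofg {A : Type*} [CommRing A] [Algebra ℂ A] {I : Ideal A} :
    IsCofiniteIdeal I ↔ (I.restrictScalars ℂ).CoFG :=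
  (Module.Finite.equiv_iff (Submodule.Quotient.restrictScalarsEquiv ℂ I)).symm

lemma cofg_ker_domRestrict' {k A V : Type*} [Field k] [AddCommGroup A] [Module k A]
    [AddCommGroup V] [Module k V] (f : A →ₗ[k] Module.End k V) {U W : Submodule k V}
    [FiniteDimensional k U] [FiniteDimensional k W] (hf : ∀ a, ∀ u ∈ U, f a u ∈ W) :
    (LinearMap.ker (LinearMap.domRestrict' U ∘ₗ f)).CoFG := by
  rw [← Submodule.range_fg_iff_ker_cofg]
  have hle : LinearMap.range (LinearMap.domRestrict' U ∘ₗ f) ≤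
      LinearMap.range (LinearMap.compRight k W.subtype : (U →ₗ[k] W) →ₗ[k] U →ₗ[k] V) := by
    rintro _ ⟨a, rfl⟩
    exact ⟨((f a).restrict (hf a) : U →ₗ[k] W), LinearMap.ext fun _ ↦ rfl⟩
  have := Submodule.finiteDimensional_of_le hle
  exact Module.Finite.iff_fg.mp this

namespace LoopAffVir

open LieModule

variable {g A L : Type*} [LieRing g] [LieAlgebra ℂ g] [CommRing A] [Algebra ℂ A]
  [LieRing L] [LieAlgebra ℂ L] {S : LoopAffVir g A L}
  {V : Type*} [AddCommGroup V] [Module ℂ V] [LieRingModule L V] [LieModule ℂ L V]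
  {γ ν : ℂ} {μ : Module.Dual ℂ S.H} {v : V}

lemma E_mul_lie_eq_zero {x : g} {a : A} (ha : ∀ v ∈ S.string V γ ν μ, ⁅S.E 1 x a, v⁆ = 0)
    (n : ℤ) (c : A) (hv : v ∈ S.string V γ ν μ) : ⁅S.E n x (c * a), v⁆ = 0 := by
  have h := lie_lie_of_eq (S.lie_DE (n - 1) 1 x c a) v
  rw [ha v hv, ha _ (D_mem_string (n - 1) c hv)] at h
  simpa using h.symm

variable (S V γ ν μ) in
/-- The space of those `a` for which `x ⊗ t ⊗ a` kills a given layer. -/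
def layerAnnihilator (x : g) : Submodule ℂ A :=
  LinearMap.ker (LinearMap.domRestrict' (S.layer V γ μ ν) ∘ₗ
    (toEnd ℂ L V : L →ₗ[ℂ] Module.End ℂ V) ∘ₗ S.E 1 x)

lemma mem_layerAnnihilator {x : g} {a : A} : a ∈ S.layerAnnihilator V γ ν μ x ↔
    ∀ v ∈ S.layer V γ μ ν, ⁅S.E 1 x a, v⁆ = 0 := by
  simp [layerAnnihilator, LinearMap.ext_iff]

variable (S V γ ν μ) in
/-- The ideal of those `a` for which all `h ⊗ tⁿ ⊗ a`, `h ∈ h̊`, kill the string of weight `μ`. -/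
def heisAnnihilator : Ideal A where
  carrier := {a | ∀ (n : ℤ) (h : S.H), ∀ v ∈ S.string V γ ν μ, ⁅S.E n h a, v⁆ = 0}
  add_mem' ha hb n h v hv := by rw [map_add, add_lie, ha n h v hv, hb n h v hv, add_zero]
  zero_mem' := by simp
  smul_mem' c _ ha n h _ hv := E_mul_lie_eq_zero (ha 1 h) n c hv

lemma mem_heisAnnihilator_of_E_one {a : A}
    (ha : ∀ h : S.H, ∀ v ∈ S.string V γ ν μ, ⁅S.E 1 h a, v⁆ = 0) :
    a ∈ S.heisAnnihilator V γ ν μ := fun n h v hv ↦ by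
  simpa using E_mul_lie_eq_zero (ha h) n 1 hv

lemma K_lie_eq_zero {x y : g} {a : A} (hxy : S.form x y ≠ 0) (h₁ : ⁅S.E 1 x a, v⁆ = 0)
    (h₂ : ⁅S.E 1 x a, ⁅S.E (-1) y 1, v⁆⁆ = 0) (h₀ : ⁅S.E 0 ⁅x, y⁆ a, v⁆ = 0) :
    ⁅S.K a, v⁆ = 0 := by
  have h := lie_lie_of_eq (S.lie_EE 1 (-1) x y a 1) v
  rw [h₂, h₁, lie_zero, add_zero, mul_one, add_neg_cancel, add_lie, h₀, if_pos rfl] at h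
  simpa [hxy] using h.symm

namespace RootVectors

variable {ι : Type*} (R : S.RootVectors ι)

include R in
lemma K_lie_eq_zero_of_mem_heisAnnihilator (i : ι) {a : A} (ha : a ∈ S.heisAnnihilator V γ ν μ)
    (hv : v ∈ S.string V γ ν μ) : ⁅S.K a, v⁆ = 0 := by
  obtain ⟨k, l, hkl⟩ := R.exists_form_ne_zero i
  have hlv : ⁅S.E (-1) l 1, v⁆ ∈ S.string V γ ν μ := by
    simpa using E_mem_string (R.coe_mem l) (-1) 1 hv
  refine K_lie_eq_zero hkl (ha 1 k v hv) (ha 1 k _ hlv) ?_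
  rw [R.lie_hh]
  simp

lemma E_coe_lie_eq_zero {n : ℤ} {a : A} (hh : ∀ i, ⁅S.E n (R.h i) a, v⁆ = 0) (k : S.H) :
    ⁅S.E n k a, v⁆ = 0 := by
  have h0 : ((toEnd ℂ L V : L →ₗ[ℂ] Module.End ℂ V).flip v ∘ₗ (S.E n).flip a) ∘ₗ
      S.H.toSubmodule.subtype = 0 := LinearMap.ext_on_range R.span_h hh
  exact LinearMap.congr_fun h0 k

variable (hInt : S.IsIntegrable V) (hK : ∀ v : V, ⁅S.K 1, v⁆ = 0)

include hInt in
lemma exists_int_eq_apply_h (i : ι) (hv : v ∈ S.layer V γ μ ν) (hv0 : v ≠ 0) :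
    ∃ z : ℤ, μ (R.h i) = z := by
  have hh := (mem_layer.mp hv).1 (R.h i)
  by_cases h0 : S.E 0 (R.h i) 1 = 0
  · rw [h0, zero_lie, eq_comm, smul_eq_zero_iff_left hv0] at hh
    exact ⟨0, by simpa using hh⟩
  · exact exists_int_eq_of_isLocallyNilpotent (R.isSl2Triple_E_zero h0)
      (R.isLocallyNilpotent_E_x hInt i 0 1) (R.isLocallyNilpotent_E_y hInt i 0 1) hh hv0

include R hInt hK in
lemma cofg_layerAnnihilator (h : S.H) : (S.layerAnnihilator V γ ν μ h).CoFG := by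
  have := finiteDimensional_layer (γ := γ) (μ := μ) (ν := ν) hInt.2.1 hK
  have := finiteDimensional_layer (γ := γ) (μ := μ + 0) (ν := ν + (1 : ℤ)) hInt.2.1 hK
  exact cofg_ker_domRestrict' _ fun a u hu ↦ E_mem_layer (R.coe_mem h) 1 a hu

include hInt hK in
/-- A translation by `α_i` shifts the `d₀`-eigenvalue by multiples of `μ(h_i)`, so that it suffices
to kill finitely many layers. -/
lemma mem_heisAnnihilator_of_forall_lt (i : ι) {z : ℤ} (hz : μ (R.h i) = z) (hz0 : z ≠ 0) {a : A}
    (ha : ∀ (h : S.H), ∀ r < z.natAbs, ∀ u ∈ S.layer V γ μ (ν + (r : ℤ)), ⁅S.E 1 h a, u⁆ = 0) :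
    a ∈ S.heisAnnihilator V γ ν μ := by
  refine mem_heisAnnihilator_of_E_one fun h v hv ↦ mem_of_mem_string
    (N := LinearMap.ker (toEnd ℂ L V (S.E 1 h a))) (fun m v hv ↦ ?_) hv
  refine R.E_lie_eq_zero_of_translate hInt hK i (m / z) one_ne_zero (fun h u hu ↦ ?_) h hv
  obtain ⟨r, hr⟩ := Int.eq_ofNat_of_zero_le (Int.emod_nonneg m hz0)
  refine ha h r (by have := Int.emod_lt m hz0; lia) u ?_
  convert hu using 2
  rw [hz, add_sub_assoc, ← Int.cast_mul, ← Int.cast_sub, ← hr, Int.emod_def, mul_comm]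

include R hInt hK in
lemma cofg_heisAnnihilator [Finite ι] (hμ : μ ≠ 0) :
    ((S.heisAnnihilator V γ ν μ).restrictScalars ℂ).CoFG := by
  by_cases hbot : ∃ m : ℤ, S.layer V γ μ (ν + m) ≠ ⊥
  swap
  · push Not at hbot
    refine Submodule.CoFG.top.of_le fun a _ n h v hv ↦ ?_
    have hv0 : v ∈ (⊥ : Submodule ℂ V) :=
      mem_of_mem_string (fun m v hv ↦ by rwa [hbot m] at hv) hv
    rw [(Submodule.mem_bot ℂ).mp hv0, lie_zero]
  obtain ⟨m, hm⟩ := hbot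
  obtain ⟨v, hv, hv0⟩ := Submodule.exists_mem_ne_zero_of_ne_bot hm
  obtain ⟨i, hi⟩ := R.exists_apply_h_ne_zero hμ
  obtain ⟨z, hz⟩ := R.exists_int_eq_apply_h hInt i hv hv0
  have hz0 : z ≠ 0 := by
    rintro rfl
    exact hi (by simpa using hz)
  let N (p : ι × Fin z.natAbs) : Submodule ℂ A :=
    S.layerAnnihilator V γ (ν + ((p.2 : ℕ) : ℤ)) μ (R.h p.1)
  have hN : (sInf (Set.range N)).CoFG := .sInf_of_finite (Set.finite_range N) <| by
    rintro _ ⟨p, rfl⟩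
    exact R.cofg_layerAnnihilator hInt hK _
  refine hN.of_le fun a ha ↦
    R.mem_heisAnnihilator_of_forall_lt hInt hK i hz hz0 fun h r hr u hu ↦ ?_
  exact R.E_coe_lie_eq_zero
    (fun j ↦ mem_layerAnnihilator.mp (Submodule.mem_sInf.mp ha _ ⟨(j, ⟨r, hr⟩), rfl⟩) u hu) h

include R hInt hK in
lemma exists_isCofiniteIdeal_le_heisAnnihilator [Finite ι] {T : Set (Module.Dual ℂ S.H)}
    (hT : T.Finite) (γ ν : ℂ) : ∃ I : Ideal A, IsCofiniteIdeal I ∧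
      ∀ ξ ∈ T, ξ ≠ 0 → I ≤ S.heisAnnihilator V γ ν ξ := by
  simp only [isCofiniteIdeal_iff_cofg]
  induction T, hT using Set.Finite.induction_on with
  | empty => exact ⟨⊤, .top, by simp⟩
  | @insert ξ T _ _ ih =>
    obtain ⟨I, hI, hIT⟩ := ih
    by_cases hξ : ξ = 0
    · exact ⟨I, hI, by simpa [Set.forall_mem_insert, hξ] using hIT⟩
    · have hcofg : ((S.heisAnnihilator V γ ν ξ ⊓ I).restrictScalars ℂ).CoFG := by
        rw [Submodule.restrictScalars_inf]
        exact (R.cofg_heisAnnihilator hInt hK hξ).inf hI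
      refine ⟨S.heisAnnihilator V γ ν ξ ⊓ I, hcofg, ?_⟩
      rw [Set.forall_mem_insert]
      exact ⟨fun _ ↦ inf_le_left, fun ζ hζ hζ0 ↦ inf_le_right.trans (hIT ζ hζ hζ0)⟩

end RootVectors

variable (S V) in
/-- The subspace of vectors killed by the ideal `g' ⊗ I` of `𝔏(A)`. -/
def killedBy (I : Ideal A) : Submodule ℂ V where
  carrier := {v | ∀ a ∈ I, (∀ (n : ℤ) (x : g), ⁅S.E n x a, v⁆ = 0) ∧ ⁅S.K a, v⁆ = 0}
  add_mem' hu hv a ha := ⟨fun n x ↦ by rw [lie_add, (hu a ha).1, (hv a ha).1, add_zero], by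
    rw [lie_add, (hu a ha).2, (hv a ha).2, add_zero]⟩
  zero_mem' := by simp
  smul_mem' c v hv a ha := ⟨fun n x ↦ by rw [lie_smul, (hv a ha).1, smul_zero], by
    rw [lie_smul, (hv a ha).2, smul_zero]⟩

variable {I : Ideal A}

lemma lie_E_lie_eq_zero_of_mem_killedBy (hv : v ∈ S.killedBy V I) {a : A} (ha : a ∈ I) (n : ℤ)
    (x : g) (z : L) : ⁅⁅S.E n x a, z⁆, v⁆ = 0 := by
  have hz : z ∈ Submodule.span ℂ _ := S.span_top ▸ Submodule.mem_top
  induction hz using Submodule.span_induction with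
  | mem z hz =>
    rcases hz with ((⟨m, y, b, rfl⟩ | ⟨m, b, rfl⟩) | ⟨b, rfl⟩) | ⟨b, rfl⟩
    · have hab := hv _ (I.mul_mem_right b ha)
      rw [S.lie_EE, add_lie, smul_lie, hab.1, hab.2, smul_zero, add_zero]
    · rw [lie_E_D, neg_lie, smul_lie, (hv _ (I.mul_mem_left b ha)).1, smul_zero, neg_zero]
    · rw [← lie_skew, S.K_central, neg_zero, zero_lie]
    · rw [← lie_skew, S.C_central, neg_zero, zero_lie]
  | zero => rw [lie_zero, zero_lie]
  | add y z _ _ hy hz => rw [lie_add, add_lie, hy, hz, add_zero]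
  | smul c z _ hz => rw [lie_smul, smul_lie, hz, smul_zero]

lemma lie_mem_killedBy (z : L) (hv : v ∈ S.killedBy V I) : ⁅z, v⁆ ∈ S.killedBy V I :=
  fun a ha ↦ ⟨fun n x ↦ by
    rw [leibniz_lie, lie_E_lie_eq_zero_of_mem_killedBy hv ha, (hv a ha).1, lie_zero, add_zero], by
    rw [leibniz_lie, S.K_central, (hv a ha).2, zero_lie, lie_zero, add_zero]⟩

lemma killedBy_eq_top [IsSimpleOrder (LieSubmodule ℂ L V)] (h : S.killedBy V I ≠ ⊥) :
    S.killedBy V I = ⊤ := by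
  let N : LieSubmodule ℂ L V := { S.killedBy V I with lie_mem := fun hv ↦ lie_mem_killedBy _ hv }
  have hN : N = ⊤ := (eq_bot_or_eq_top N).resolve_left fun hN ↦
    h (congrArg LieSubmodule.toSubmodule hN)
  exact congrArg LieSubmodule.toSubmodule hN

lemma K_lie_eq_zero_of_E_lie_eq_zero {a : A} (hE : ∀ n (x : g) (v : V), ⁅S.E n x a, v⁆ = 0)
    {x y : g} (hxy : S.form x y ≠ 0) (v : V) : ⁅S.K a, v⁆ = 0 :=
  K_lie_eq_zero hxy (hE 1 x v) (hE 1 x _) (hE 0 _ v)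

variable {β : Module.Dual ℂ S.H}

lemma E_lie_eq_zero_of_mem_heisAnnihilator {x : g} (hx : x ∈ S.rootSp β) (hβ : β ≠ 0) {b : A}
    (hμ : b ∈ S.heisAnnihilator V γ ν μ) (hμβ : b ∈ S.heisAnnihilator V γ ν (μ + β)) (n : ℤ)
    (hv : v ∈ S.string V γ ν μ) : ⁅S.E n x b, v⁆ = 0 := by
  obtain ⟨k, hk⟩ : ∃ k, β k ≠ 0 := not_forall.mp fun h0 ↦ hβ (LinearMap.ext h0)
  have h := lie_lie_of_eq (S.lie_E_zero_E n k x b 1) v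
  rw [hμ 0 k v hv, hμβ 0 k _ (E_mem_string hx n 1 hv), (S.rootSp_def _ _).mp hx] at h
  simpa [hk] using h.symm

namespace RootVectors

variable {ι : Type*} (R : S.RootVectors ι)

lemma E_lie_eq_zero {n : ℤ} {a : A} (hH : ∀ k : S.H, ⁅S.E n k a, v⁆ = 0)
    (hx : ∀ i, ⁅S.E n (R.x i) a, v⁆ = 0) (x : g) : ⁅S.E n x a, v⁆ = 0 :=
  LinearMap.congr_fun (f := (toEnd ℂ L V : L →ₗ[ℂ] Module.End ℂ V).flip v ∘ₗ (S.E n).flip a)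
    (g := 0) (R.ext_linearMap hH hx) x

include R in
lemma E_lie_eq_zero_of_E_zero_lie_eq_zero (hH : ∀ (k : S.H) (v : V), ⁅S.E 0 k 1, v⁆ = 0) (n : ℤ)
    (x : g) (a : A) (v : V) : ⁅S.E n x a, v⁆ = 0 := by
  have hx (i : ι) (m : ℤ) (b : A) (w : V) : ⁅S.E m (R.x i) b, w⁆ = 0 := by
    have h := lie_lie_of_eq (S.lie_E_zero_E m (R.h i) (R.x i) 1 b) w
    rw [hH, hH, R.lie_hx, R.root_h] at h
    simpa using h.symm
  refine R.E_lie_eq_zero (fun k ↦ R.E_coe_lie_eq_zero (fun i ↦ ?_) k) (fun i ↦ hx i n a v) x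
  have h := lie_lie_of_eq (R.lie_E_zero_x_y i n 1 a) v
  rw [hx, hx, lie_zero, add_zero, one_mul] at h
  exact h.symm

variable {i : ι} {u : V}

lemma E_x_lie_eq_zero_of_E_y_lie_eq_zero (hInt : S.IsIntegrable V) (hh : ⁅S.E 0 (R.h i) 1, u⁆ = 0)
    (hy : ⁅S.E 0 (R.y i) 1, u⁆ = 0) : ⁅S.E 0 (R.x i) 1, u⁆ = 0 := by
  rcases eq_or_ne u 0 with rfl | hu
  · exact lie_zero _
  by_cases h0 : S.E 0 (R.h i) 1 = 0
  · have hx := S.lie_E_zero_E 0 (R.h i) (R.x i) 1 1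
    rw [h0, zero_lie, R.lie_hx, R.root_h, mul_one, map_smul, LinearMap.smul_apply, eq_comm,
      smul_eq_zero_iff_right two_ne_zero] at hx
    rw [hx, zero_lie]
  · have P : (R.isSl2Triple_E_zero h0).symm.HasPrimitiveVectorWith u (0 : ℂ) :=
      ⟨hu, by rw [neg_lie, hh, neg_zero, zero_smul], hy⟩
    obtain ⟨m, hm, hm'⟩ :=
      exists_nat_eq_and_toEnd_f_pow_succ_eq_zero P (R.isLocallyNilpotent_E_x hInt i 0 1 u)
    obtain rfl : m = 0 := by exact_mod_cast hm.symm
    simpa using hm'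

lemma E_h_lie_eq_zero_of_forall_E_y_lie_eq_zero (hInt : S.IsIntegrable V)
    (hh : ⁅S.E 0 (R.h i) 1, u⁆ = 0) (hy : ∀ k c, ⁅S.E k (R.y i) c, u⁆ = 0) (k : ℤ) (c : A) :
    ⁅S.E k (R.h i) c, u⁆ = 0 := by
  have hx := R.E_x_lie_eq_zero_of_E_y_lie_eq_zero hInt hh (hy 0 1)
  have h := lie_lie_of_eq (R.lie_E_zero_x_y i k 1 c) u
  rw [hx, hy, lie_zero, lie_zero, add_zero, one_mul] at h
  exact h.symm

lemma E_x_lie_eq_zero_of_forall_E_y_lie_eq_zero (hInt : S.IsIntegrable V)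
    (hh : ⁅S.E 0 (R.h i) 1, u⁆ = 0) (hy : ∀ k c, ⁅S.E k (R.y i) c, u⁆ = 0) (k : ℤ) (c : A) :
    ⁅S.E k (R.x i) c, u⁆ = 0 := by
  have hx := R.E_x_lie_eq_zero_of_E_y_lie_eq_zero hInt hh (hy 0 1)
  have hhk := R.E_h_lie_eq_zero_of_forall_E_y_lie_eq_zero hInt hh hy k c
  have h := lie_lie_of_eq (R.lie_E_x_h i 0 k (R.h i) 1 c) u
  rw [hx, hhk, lie_zero, lie_zero, R.root_h] at h
  simpa using h.symm

include R in
lemma mem_killedBy_of_forall_E_lie_eq_zero {I : Ideal A} (i : ι)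
    (hI : I ≤ S.heisAnnihilator V γ ν μ) (hv : v ∈ S.string V γ ν μ)
    (hx : ∀ i n, ∀ a ∈ I, ⁅S.E n (R.x i) a, v⁆ = 0) : v ∈ S.killedBy V I := fun a ha ↦
  ⟨fun n ↦ R.E_lie_eq_zero (fun k ↦ hI ha n k v hv) fun j ↦ hx j n a ha,
    R.K_lie_eq_zero_of_mem_heisAnnihilator i (hI ha) hv⟩

variable (hv : v ∈ S.string V γ ν (-R.root i))

include hv in
lemma E_zero_lie_E_x_lie_eq_zero (h : S.H) (n : ℤ) (b : A) :
    ⁅S.E 0 h 1, ⁅S.E n (R.x i) b, v⁆⁆ = 0 := by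
  rw [E_zero_of_mem_string h (E_mem_string (R.x_mem i) n b hv), neg_add_cancel,
    LinearMap.zero_apply, zero_smul]

variable {b c : A} (hb : b ∈ S.heisAnnihilator V γ ν (-R.root i))

include hb hv in
lemma E_y_lie_E_x_lie_eq_zero (hb₂ : b ∈ S.heisAnnihilator V γ ν (-R.root i + -R.root i))
    (n k : ℤ) (c : A) : ⁅S.E k (R.y i) c, ⁅S.E n (R.x i) b, v⁆⁆ = 0 := by
  have hcb := Ideal.mul_mem_left _ c hb
  have hlast : ⁅S.E n (R.x i) b, ⁅S.E k (R.y i) c, v⁆⁆ = 0 :=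
    E_lie_eq_zero_of_mem_heisAnnihilator (R.x_mem i) (R.root_ne_zero i) hb₂
      (by rwa [neg_add_cancel_right]) n (E_mem_string (R.y_mem i) k c hv)
  rw [lie_lie_of_eq (S.lie_EE k n (R.y i) (R.x i) c b), hlast, ← lie_skew,
    (R.isSl2Triple i).lie_e_f, add_lie, smul_lie, map_neg, LinearMap.neg_apply, neg_lie,
    hcb _ _ v hv, R.K_lie_eq_zero_of_mem_heisAnnihilator i hcb hv]
  simp

include hv in
lemma E_coe_lie_E_x_lie (hc : c ∈ S.heisAnnihilator V γ ν (-R.root i)) (n k : ℤ) (h : S.H) :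
    ⁅S.E k h c, ⁅S.E n (R.x i) b, v⁆⁆ = R.root i h • ⁅S.E (n + k) (R.x i) (b * c), v⁆ := by
  have hcomm := lie_lie_of_eq (R.lie_E_x_h i n k h b c) v
  rw [hc k h v hv, lie_zero, neg_lie, smul_lie, eq_comm, neg_add_eq_zero] at hcomm
  exact hcomm.symm

include hb hv in
lemma E_coe_lie_E_x_lie_eq_zero (hInt : S.IsIntegrable V)
    (hb₂ : b ∈ S.heisAnnihilator V γ ν (-R.root i + -R.root i))
    (hc : c ∈ S.heisAnnihilator V γ ν (-R.root i)) (n k : ℤ) (h : S.H) :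
    ⁅S.E k h c, ⁅S.E n (R.x i) b, v⁆⁆ = 0 := by
  have hi := R.E_h_lie_eq_zero_of_forall_E_y_lie_eq_zero hInt
    (R.E_zero_lie_E_x_lie_eq_zero hv (R.h i) n b) (R.E_y_lie_E_x_lie_eq_zero hv hb hb₂ n) k c
  rw [R.E_coe_lie_E_x_lie hv hc, R.root_h, smul_eq_zero_iff_right two_ne_zero] at hi
  rw [R.E_coe_lie_E_x_lie hv hc, hi, smul_zero]

include hb hv in
lemma E_x_lie_E_x_lie_eq_zero {j : ι}
    (hc : c ∈ S.heisAnnihilator V γ ν (-R.root i))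
    (hcj : c ∈ S.heisAnnihilator V γ ν (-R.root i + R.root j))
    (hbj : b ∈ S.heisAnnihilator V γ ν (R.root j)) (n k : ℤ) :
    ⁅S.E k (R.x j) c, ⁅S.E n (R.x i) b, v⁆⁆ = 0 := by
  have hcb := Ideal.mul_mem_left _ c hb
  have hlast : ⁅S.E k (R.x j) c, v⁆ = 0 :=
    E_lie_eq_zero_of_mem_heisAnnihilator (R.x_mem j) (R.root_ne_zero j) hc hcj k hv
  have hxx : ⁅R.x j, R.x i⁆ ∈ S.rootSp (R.root j + R.root i) :=
    lie_mem_rootSp_add (R.x_mem j) (R.x_mem i)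
  have hE : ⁅S.E (k + n) ⁅R.x j, R.x i⁆ (c * b), v⁆ = 0 := by
    by_cases hji : R.root j + R.root i = 0
    · rw [hji] at hxx
      exact hcb (k + n) ⟨_, mem_H_of_mem_rootSp_zero hxx⟩ v hv
    · refine E_lie_eq_zero_of_mem_heisAnnihilator hxx hji hcb ?_ (k + n) hv
      rw [neg_add_cancel_comm_assoc]
      exact Ideal.mul_mem_left _ c hbj
  rw [lie_lie_of_eq (S.lie_EE k n (R.x j) (R.x i) c b), hlast, add_lie, smul_lie, hE,
    R.K_lie_eq_zero_of_mem_heisAnnihilator i hcb hv, smul_zero, add_zero, lie_zero, add_zero]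

include hv in
lemma E_x_lie_mem_killedBy (hInt : S.IsIntegrable V) {I : Ideal A} (hb : b ∈ I)
    (hI : I ≤ S.heisAnnihilator V γ ν (-R.root i))
    (hI₂ : I ≤ S.heisAnnihilator V γ ν (-R.root i + -R.root i))
    (hIj : ∀ j, R.root j ≠ R.root i → I ≤ S.heisAnnihilator V γ ν (-R.root i + R.root j))
    (hI' : ∀ j, I ≤ S.heisAnnihilator V γ ν (R.root j)) (n : ℤ) :
    ⁅S.E n (R.x i) b, v⁆ ∈ S.killedBy V I := by
  refine fun c hc ↦ ⟨fun k x ↦ R.E_lie_eq_zero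
    (R.E_coe_lie_E_x_lie_eq_zero hv (hI hb) hInt (hI₂ hb) (hI hc) n k) (fun j ↦ ?_) x, ?_⟩
  · by_cases hj : R.root j = R.root i
    · obtain rfl := R.root_injective hj
      exact R.E_x_lie_eq_zero_of_forall_E_y_lie_eq_zero hInt
        (R.E_zero_lie_E_x_lie_eq_zero hv (R.h j) n b)
        (R.E_y_lie_E_x_lie_eq_zero hv (hI hb) (hI₂ hb) n) k c
    · exact R.E_x_lie_E_x_lie_eq_zero hv (hI hb) (hI hc) (hIj j hj hc) (hI' j hb) n k
  · rw [lie_lie_of_eq (S.K_central c _), R.K_lie_eq_zero_of_mem_heisAnnihilator i (hI hc) hv,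
      zero_lie, lie_zero, add_zero]

include R in
lemma exists_isCofiniteIdeal_killedBy_ne_bot [Finite ι] (hInt : S.IsIntegrable V)
    (hK : ∀ v : V, ⁅S.K 1, v⁆ = 0) (hμ : μ ≠ 0) (hv : v ∈ S.layer V γ μ ν) (hv0 : v ≠ 0) :
    ∃ I : Ideal A, IsCofiniteIdeal I ∧ S.killedBy V I ≠ ⊥ := by
  obtain ⟨i₀, -⟩ := R.exists_apply_h_ne_zero hμ
  let T : Set (Module.Dual ℂ S.H) :=
    {μ} ∪ Set.range R.root ∪ Set.range (μ + R.root ·) ∪ Set.range (μ + -R.root ·)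
  have hT : T.Finite := (((Set.finite_singleton μ).union (Set.finite_range _)).union
    (Set.finite_range _)).union (Set.finite_range _)
  obtain ⟨I, hI, hIT⟩ := R.exists_isCofiniteIdeal_le_heisAnnihilator hInt hK hT γ ν
  have hIμ : I ≤ S.heisAnnihilator V γ ν μ := hIT μ (by simp [T]) hμ
  have hIadd (j : ι) (hj : μ + R.root j ≠ 0) : I ≤ S.heisAnnihilator V γ ν (μ + R.root j) :=
    hIT _ (by simp [T]) hj
  have hvs := layer_le_string hv
  refine ⟨I, hI, (Submodule.ne_bot_iff _).mpr ?_⟩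
  by_cases hx : ∀ i n, ∀ a ∈ I, ⁅S.E n (R.x i) a, v⁆ = 0
  · exact ⟨v, R.mem_killedBy_of_forall_E_lie_eq_zero i₀ hIμ hvs hx, hv0⟩
  push Not at hx
  obtain ⟨i, n, b, hb, hu⟩ := hx
  obtain rfl : μ = -R.root i := by
    by_contra hne
    have hadd : μ + R.root i ≠ 0 := fun h ↦ hne (eq_neg_of_add_eq_zero_left h)
    exact hu (E_lie_eq_zero_of_mem_heisAnnihilator (R.x_mem i) (R.root_ne_zero i) (hIμ hb)
      (hIadd i hadd hb) n hvs)
  refine ⟨_, R.E_x_lie_mem_killedBy hvs hInt hb hIμ (hIT _ (by simp [T]) ?_)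
    (fun j hj ↦ hIadd j ?_) (fun j ↦ hIT _ (by simp [T]) (R.root_ne_zero j)) n, hu⟩
  · simpa [← two_smul ℂ] using R.root_ne_zero i
  · rwa [neg_add_eq_zero.ne, ne_comm]

end RootVectors

end LoopAffVir

theorem statement14_general
    {g A L : Type*} [LieRing g] [LieAlgebra ℂ g] [FiniteDimensional ℂ g]
    [LieAlgebra.IsKilling ℂ g] [Nontrivial g] [CommRing A] [Algebra ℂ A]
    [LieRing L] [LieAlgebra ℂ L] (S : LoopAffVir g A L)
    (V : Type*) [AddCommGroup V] [Module ℂ V] [LieRingModule L V] [LieModule ℂ L V]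
    (hIrr : IsSimpleOrder (LieSubmodule ℂ L V)) (hInt : S.IsIntegrable V)
    (hK0 : ∀ v : V, ⁅S.K 1, v⁆ = 0) :
    ∃ I : Ideal A, IsCofiniteIdeal I ∧ ∀ a ∈ I,
      (∀ (n : ℤ) (x : g) (v : V), ⁅S.E n x a, v⁆ = 0) ∧ (∀ v : V, ⁅S.K a, v⁆ = 0) := by
  obtain ⟨R⟩ := S.nonempty_rootVectors
  by_cases hwt : ∃ γ μ ν, μ ≠ 0 ∧ S.layer V γ μ ν ≠ ⊥
  · obtain ⟨γ, μ, ν, hμ, hne⟩ := hwt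
    obtain ⟨v, hv, hv0⟩ := Submodule.exists_mem_ne_zero_of_ne_bot hne
    obtain ⟨I, hI, hkill⟩ := R.exists_isCofiniteIdeal_killedBy_ne_bot hInt hK0 hμ hv hv0
    have hall (v : V) : v ∈ S.killedBy V I := by
      rw [LoopAffVir.killedBy_eq_top hkill]
      exact Submodule.mem_top
    exact ⟨I, hI, fun a ha ↦ ⟨fun n x v ↦ (hall v a ha).1 n x, fun v ↦ (hall v a ha).2⟩⟩
  · push Not at hwt
    have hE := R.E_lie_eq_zero_of_E_zero_lie_eq_zero
      (LoopAffVir.E_zero_lie_eq_zero_of_layer_eq_bot hInt.1 hwt)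
    obtain ⟨x, y, hxy⟩ := R.exists_form_ne_zero R.nonempty_index.some
    exact ⟨⊤, isCofiniteIdeal_iff_cofg.mpr .top,
      fun a _ ↦ ⟨fun n x v ↦ hE n x a v,
        LoopAffVir.K_lie_eq_zero_of_E_lie_eq_zero (hE · · a) hxy⟩⟩

/-- Proposition `p4`.  Let `V` be an irreducible integrable
`𝔏(A)`-module with finite dimensional weight spaces on which `K ⊗ 1` acts trivially.
Then there is a cofinite ideal `I` of `A` with `(g' ⊗ I) ⬝ V = 0`,
where `g' = g̊ ⊗ ℂ[t,t⁻¹] ⊕ ℂK`. -/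
theorem statement14
    {g A L : Type*} [LieRing g] [LieAlgebra ℂ g] [FiniteDimensional ℂ g]
    [LieAlgebra.IsSimple ℂ g]
    [CommRing A] [Algebra ℂ A] [Algebra.FiniteType ℂ A]
    [LieRing L] [LieAlgebra ℂ L]
    (S : LoopAffVir g A L)
    (V : Type*) [AddCommGroup V] [Module ℂ V] [LieRingModule L V] [LieModule ℂ L V]
    (hIrr : IsSimpleOrder (LieSubmodule ℂ L V))
    (hInt : S.IsIntegrable V)
    (hK0 : ∀ v : V, ⁅S.K 1, v⁆ = 0)
    :
    ∃ I : Ideal A, IsCofiniteIdeal I ∧ ∀ a ∈ I,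
      (∀ (n : ℤ) (x : g) (v : V), ⁅S.E n x a, v⁆ = 0) ∧ (∀ v : V, ⁅S.K a, v⁆ = 0) := by
  have := LieAlgebra.IsSimple.nontrivial ℂ g
  exact statement14_general S V hIrr hInt hK0
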